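/- In the bivariate skew normal setting, suppose B(u) → +∞ as u → 0⁺. Then A₁(u) → -∞ and P₁(u) ~ √(1-ρ²)·e^{-A₁(u)²/(2(1-ρ²))} / (√(2π)·|A₁(u)|·Φ(λ₂·Q₂(u))) as u → 0⁺, where f ~ g means f/g → 1. -/

import Mathlib

/-!
Write `x = Q₁(u)`, `y = Q₂(u)`, `A = x - ρy`, `B = α₁x + α₂y`; both quantiles tend to `-∞`.

*Divergence of `A`.* The left tail of `SN(l)` satisfies `log F(x) ~ -(1 + max(l, 0)²) x² / 2`
(`log_snCDF_div_sq`). Since `F₁(x) = u = F₂(y)`, the ratio `x / y` tends to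
`r = √((1 + max(l₂, 0)²) / (1 + max(l₁, 0)²))` (`quantile_ratio`). An algebraic case distinction on
the signs of `l₁, l₂` (`ratio_dichotomy`) shows that `r > ρ` or `α₁ r + α₂ > 0`. In the first case
`A = y (x / y - ρ) → -∞`; in the second `B = y (α₁ x / y + α₂) → -∞`, contrary to the assumption
on `B`.

*The asymptotics.* Put `s = 1 - ρ²`. Substituting `z = x - w / |A|` and completing the square, the
factor `Φ(l₂ y)` and all prefactors cancel, and the quotient of the two sides equals
`∫_0^∞ s⁻¹ e^{-w/s} · e^{-(w/|A|)²/(2s)} Φ(B - α₁ w / |A|) dw`. The last two factors lie in `[0, 1]`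
and tend to `1` pointwise, so the integral tends to `1` by dominated convergence (`laplace_limit`).
-/

open Real Filter Topology MeasureTheory

/-- The standard normal cumulative distribution function. -/
noncomputable def stdNormalCDF (x : ℝ) : ℝ :=
  ∫ t in Set.Iic x, (Real.sqrt (2 * Real.pi))⁻¹ * Real.exp (-(t ^ 2) / 2)

/-- The cdf of the skew normal distribution `SN(l)`. -/
noncomputable def snCDF (l : ℝ) (x : ℝ) : ℝ :=
  ∫ t in Set.Iic x,
    2 * ((Real.sqrt (2 * Real.pi))⁻¹ * Real.exp (-(t ^ 2) / 2)) * stdNormalCDF (l * t)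

/-! ### The standard normal distribution -/

lemma integrable_gauss {k : ℝ} (hk : 0 < k) :
    Integrable (fun t : ℝ => Real.exp (-(k * t ^ 2) / 2)) := by
  have h := integrable_exp_neg_mul_sq (b := k / 2) (by positivity)
  refine h.congr (Eventually.of_forall fun t => ?_)
  dsimp only
  congr 1; ring

lemma integrable_stdNormalPDF :
    Integrable (fun t : ℝ => (Real.sqrt (2 * Real.pi))⁻¹ * Real.exp (-(t ^ 2) / 2)) := by
  have h := (integrable_gauss one_pos).const_mul (Real.sqrt (2 * Real.pi))⁻¹
  simpa using h

lemma integral_stdNormalPDF :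
    ∫ t : ℝ, (Real.sqrt (2 * Real.pi))⁻¹ * Real.exp (-(t ^ 2) / 2) = 1 := by
  rw [integral_const_mul]
  have h := integral_gaussian (1 / 2)
  have e : (fun x : ℝ => Real.exp (-(1 / 2) * x ^ 2)) = fun x => Real.exp (-(x ^ 2) / 2) := by
    funext x; congr 1; ring
  rw [e] at h
  rw [h, show π / (1 / 2) = 2 * π by ring]
  exact inv_mul_cancel₀ (by positivity)

lemma stdNormalCDF_nonneg (x : ℝ) : 0 ≤ stdNormalCDF x :=
  integral_nonneg fun t => by positivity

lemma stdNormalCDF_mono : Monotone stdNormalCDF := fun x y hxy =>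
  setIntegral_mono_set integrable_stdNormalPDF.integrableOn
    (Eventually.of_forall fun t => by dsimp only [Pi.zero_apply]; positivity)
    (Set.Iic_subset_Iic.2 hxy).eventuallyLE

lemma stdNormalCDF_tendsto_one : Tendsto stdNormalCDF atTop (𝓝 1) := by
  have h := (aecover_Iic (μ := (volume : Measure ℝ))
    tendsto_id).integral_tendsto_of_countably_generated
    integrable_stdNormalPDF
  rw [integral_stdNormalPDF] at h
  exact h

lemma stdNormalCDF_le_one (x : ℝ) : stdNormalCDF x ≤ 1 :=
  stdNormalCDF_mono.ge_of_tendsto stdNormalCDF_tendsto_one x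

/-- The tail integral is bounded below by the part over the unit interval `(x - 1, x]`. -/
lemma le_setIntegral_Iic {f : ℝ → ℝ} (hf : Integrable f) (h0 : ∀ t, 0 ≤ f t) {x c : ℝ}
    (hc : ∀ t ∈ Set.Ioc (x - 1) x, c ≤ f t) : c ≤ ∫ t in Set.Iic x, f t := by
  calc c = ∫ _t in Set.Ioc (x - 1) x, c := by simp
    _ ≤ ∫ t in Set.Ioc (x - 1) x, f t :=
      setIntegral_mono_on (by simp) hf.integrableOn measurableSet_Ioc hc
    _ ≤ ∫ t in Set.Iic x, f t :=
      setIntegral_mono_set hf.integrableOn (Eventually.of_forall h0)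
        (Set.Ioc_subset_Iic_self).eventuallyLE

lemma le_stdNormalCDF {x : ℝ} (hx : x ≤ 0) :
    (Real.sqrt (2 * Real.pi))⁻¹ * Real.exp (-((x - 1) ^ 2) / 2) ≤ stdNormalCDF x := by
  refine le_setIntegral_Iic integrable_stdNormalPDF (fun t => by positivity) fun t ht => ?_
  have : t ^ 2 ≤ (x - 1) ^ 2 := by nlinarith [ht.1, ht.2]
  gcongr

lemma stdNormalCDF_pos (x : ℝ) : 0 < stdNormalCDF x := by
  have h := le_stdNormalCDF (min_le_right x 0)
  refine lt_of_lt_of_le (lt_of_lt_of_le ?_ h) (stdNormalCDF_mono (min_le_left x 0))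
  positivity

/-- Gaussian tail bound; it rests on `t² ≥ x² + (t - x)²` for `t ≤ x ≤ 0`. -/
lemma gauss_tail_le {k x : ℝ} (hk : 0 < k) (hx : x ≤ 0) :
    ∫ t in Set.Iic x, Real.exp (-(k * t ^ 2) / 2)
      ≤ Real.exp (-(k * x ^ 2) / 2) * ∫ t, Real.exp (-(k * t ^ 2) / 2) := by
  have hi := (integrable_gauss hk).comp_sub_right x
  calc ∫ t in Set.Iic x, Real.exp (-(k * t ^ 2) / 2)
      ≤ ∫ t in Set.Iic x, Real.exp (-(k * x ^ 2) / 2) * Real.exp (-(k * (t - x) ^ 2) / 2) := by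
        refine setIntegral_mono_on (integrable_gauss hk).integrableOn
          (hi.const_mul _).integrableOn measurableSet_Iic fun t ht => ?_
        rw [← Real.exp_add]
        refine Real.exp_le_exp.2 ?_
        have h1 : 0 ≤ k * (x * (t - x)) :=
          mul_nonneg hk.le (mul_nonneg_of_nonpos_of_nonpos hx (sub_nonpos.2 ht))
        nlinarith
    _ ≤ ∫ t, Real.exp (-(k * x ^ 2) / 2) * Real.exp (-(k * (t - x) ^ 2) / 2) :=
        setIntegral_le_integral (hi.const_mul _) (Eventually.of_forall fun t => by
          dsimp only [Pi.zero_apply]; positivity)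
    _ = _ := by
        rw [integral_const_mul,
          integral_sub_right_eq_self (fun t : ℝ => Real.exp (-(k * t ^ 2) / 2)) x]

lemma stdNormalCDF_le {x : ℝ} (hx : x ≤ 0) : stdNormalCDF x ≤ Real.exp (-(x ^ 2) / 2) := by
  have h := gauss_tail_le one_pos hx
  simp only [one_mul] at h
  have h1 := integral_stdNormalPDF
  rw [integral_const_mul] at h1
  unfold stdNormalCDF
  rw [integral_const_mul]
  calc _ ≤ (Real.sqrt (2 * Real.pi))⁻¹ * _ := mul_le_mul_of_nonneg_left h (by positivity)
    _ = Real.exp (-(x ^ 2) / 2) * ((Real.sqrt (2 * Real.pi))⁻¹ *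
          ∫ t : ℝ, Real.exp (-(t ^ 2) / 2)) := by ring
    _ = _ := by rw [h1, mul_one]

/-! ### Tails of the skew normal distribution -/

/-- The density of `SN(l)`. -/
noncomputable def snPDF (l t : ℝ) : ℝ :=
  2 * ((Real.sqrt (2 * Real.pi))⁻¹ * Real.exp (-(t ^ 2) / 2)) * stdNormalCDF (l * t)

lemma snPDF_nonneg (l t : ℝ) : 0 ≤ snPDF l t :=
  mul_nonneg (by positivity) (stdNormalCDF_nonneg _)

lemma integrable_snPDF (l : ℝ) : Integrable (snPDF l) := by
  refine (integrable_stdNormalPDF.const_mul 2).mul_bdd (c := 1) ?_ ?_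
  · exact (stdNormalCDF_mono.measurable.comp (measurable_const_mul l)).aestronglyMeasurable
  · refine Eventually.of_forall fun t => ?_
    rw [Real.norm_of_nonneg (stdNormalCDF_nonneg _)]
    exact stdNormalCDF_le_one _

lemma snCDF_mono (l : ℝ) : Monotone (snCDF l) := fun _ _ hxy =>
  setIntegral_mono_set (integrable_snPDF l).integrableOn
    (Eventually.of_forall fun t => snPDF_nonneg l t)
    (Set.Iic_subset_Iic.2 hxy).eventuallyLE

lemma le_snCDF (l : ℝ) {x : ℝ} (hx : x ≤ 0) :
    (Real.pi)⁻¹ * Real.exp (-((x - 1) ^ 2 + (max l 0 * (x - 1) - 1) ^ 2) / 2) ≤ snCDF l x := by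
  refine le_setIntegral_Iic (integrable_snPDF l) (snPDF_nonneg l) fun t ht => ?_
  have hm : 0 ≤ max l 0 := le_max_right _ _
  have h1 : max l 0 * (x - 1) ≤ l * t := by
    have := mul_le_mul_of_nonneg_left ht.1.le hm
    have := mul_le_mul_of_nonpos_right (le_max_left l 0) (ht.2.trans hx)
    linarith
  have h2 := (le_stdNormalCDF (x := max l 0 * (x - 1))
    (mul_nonpos_of_nonneg_of_nonpos hm (by linarith))).trans (stdNormalCDF_mono h1)
  have h3 : t ^ 2 ≤ (x - 1) ^ 2 := by nlinarith [ht.1, ht.2]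
  have h4 : (Real.sqrt (2 * Real.pi))⁻¹ * (Real.sqrt (2 * Real.pi))⁻¹ = (2 * Real.pi)⁻¹ := by
    rw [← mul_inv, Real.mul_self_sqrt (by positivity)]
  calc _ = 2 * ((Real.sqrt (2 * Real.pi))⁻¹ * Real.exp (-((x - 1) ^ 2) / 2)) *
        ((Real.sqrt (2 * Real.pi))⁻¹ * Real.exp (-((max l 0 * (x - 1) - 1) ^ 2) / 2)) := by
        rw [show ∀ a b c : ℝ, 2 * (a * b) * (a * c) = 2 * (a * a) * (b * c) by intros; ring, h4,
          ← Real.exp_add]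
        congr 1
        · rw [mul_inv]; ring
        · congr 1; ring
    _ ≤ 2 * ((Real.sqrt (2 * Real.pi))⁻¹ * Real.exp (-(t ^ 2) / 2)) * stdNormalCDF (l * t) := by
        gcongr

lemma snCDF_pos (l x : ℝ) : 0 < snCDF l x := by
  refine lt_of_lt_of_le (lt_of_lt_of_le ?_ (le_snCDF l (min_le_right x 0)))
    (snCDF_mono l (min_le_left x 0))
  positivity

lemma snCDF_le (l : ℝ) : ∃ C > 0, ∀ x ≤ 0,
    snCDF l x ≤ C * Real.exp (-((1 + max l 0 ^ 2) * x ^ 2) / 2) := by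
  set m := max l 0
  have hm : 0 ≤ m := le_max_right _ _
  have hk : 0 < 1 + m ^ 2 := by positivity
  set I := ∫ t : ℝ, Real.exp (-((1 + m ^ 2) * t ^ 2) / 2)
  have hI : 0 ≤ I := integral_nonneg fun t => by positivity
  refine ⟨2 * (Real.sqrt (2 * Real.pi))⁻¹ * (I + 1), by positivity, fun x hx => ?_⟩
  calc snCDF l x ≤ ∫ t in Set.Iic x, 2 * (Real.sqrt (2 * Real.pi))⁻¹ *
        Real.exp (-((1 + m ^ 2) * t ^ 2) / 2) := by
        refine setIntegral_mono_on (integrable_snPDF l).integrableOn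
          ((integrable_gauss hk).const_mul _).integrableOn measurableSet_Iic fun t ht => ?_
        have ht0 : t ≤ 0 := le_trans ht hx
        have h1 : stdNormalCDF (l * t) ≤ Real.exp (-((m * t) ^ 2) / 2) := by
          rcases le_total l 0 with hl | hl
          · have : m = 0 := max_eq_right hl
            simpa [this] using stdNormalCDF_le_one _
          · have : m = l := max_eq_left hl
            rw [this]
            exact stdNormalCDF_le (mul_nonpos_of_nonneg_of_nonpos hl ht0)
        calc _ ≤ 2 * ((Real.sqrt (2 * Real.pi))⁻¹ * Real.exp (-(t ^ 2) / 2)) *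
              Real.exp (-((m * t) ^ 2) / 2) := by gcongr
          _ = _ := by
              rw [show ∀ a b c : ℝ, 2 * (a * b) * c = 2 * a * (b * c) by intros; ring,
                ← Real.exp_add]
              congr 2; ring
    _ ≤ 2 * (Real.sqrt (2 * Real.pi))⁻¹ * (Real.exp (-((1 + m ^ 2) * x ^ 2) / 2) * I) := by
        rw [integral_const_mul]
        exact mul_le_mul_of_nonneg_left (gauss_tail_le hk hx) (by positivity)
    _ ≤ 2 * (Real.sqrt (2 * Real.pi))⁻¹ * (Real.exp (-((1 + m ^ 2) * x ^ 2) / 2) * (I + 1)) := by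
        gcongr; linarith
    _ = _ := by ring

/-- Logarithmic tail asymptotics of the skew normal distribution: a positive skewness parameter `l`
sharpens the left tail exponent from `1/2` to `(1 + l²)/2`, a nonpositive one leaves it unchanged. -/
lemma log_snCDF_div_sq (l : ℝ) :
    Tendsto (fun x => Real.log (snCDF l x) / x ^ 2) atBot (𝓝 (-(1 + max l 0 ^ 2) / 2)) := by
  obtain ⟨C, hC, hle⟩ := snCDF_le l
  set m := max l 0
  have hinv : Tendsto (fun x : ℝ => x⁻¹) atBot (𝓝 0) := tendsto_inv_atBot_zero
  have hlo : Tendsto (fun x : ℝ => Real.log Real.pi⁻¹ * (x⁻¹) ^ 2 +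
      -((1 - x⁻¹) ^ 2 + (m * (1 - x⁻¹) - x⁻¹) ^ 2) / 2) atBot (𝓝 (-(1 + m ^ 2) / 2)) := by
    have hc : Continuous (fun v : ℝ => Real.log Real.pi⁻¹ * v ^ 2 +
      -((1 - v) ^ 2 + (m * (1 - v) - v) ^ 2) / 2) := by fun_prop
    have h := (hc.tendsto 0).comp hinv
    simpa [Function.comp_def] using h
  have hhi : Tendsto (fun x : ℝ => Real.log C * (x⁻¹) ^ 2 + -(1 + m ^ 2) / 2) atBot
      (𝓝 (-(1 + m ^ 2) / 2)) := by
    have hc : Continuous (fun v : ℝ => Real.log C * v ^ 2 + -(1 + m ^ 2) / 2) := by fun_prop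
    have h := (hc.tendsto 0).comp hinv
    simpa [Function.comp_def] using h
  refine tendsto_of_tendsto_of_tendsto_of_le_of_le' hlo hhi ?_ ?_
  · filter_upwards [eventually_lt_atBot (0 : ℝ)] with x hx
    have h := Real.log_le_log (by positivity) (le_snCDF l hx.le)
    rw [Real.log_mul (by positivity) (by positivity), Real.log_exp] at h
    have hx2 : 0 < x ^ 2 := sq_pos_of_neg hx
    rw [le_div_iff₀ hx2]
    refine le_trans (le_of_eq ?_) h
    have := hx.ne
    field_simp
    ring
  · filter_upwards [eventually_lt_atBot (0 : ℝ)] with x hx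
    have h := Real.log_le_log (snCDF_pos l x) (hle x hx.le)
    rw [Real.log_mul (by positivity) (by positivity), Real.log_exp] at h
    have hx2 : 0 < x ^ 2 := sq_pos_of_neg hx
    rw [div_le_iff₀ hx2]
    refine le_trans h (le_of_eq ?_)
    have := hx.ne
    field_simp

/-! ### The ratio of the quantiles -/

lemma quantile_tendsto_atBot {l : ℝ} {Q : ℝ → ℝ}
    (hQ : ∀ u ∈ Set.Ioo (0 : ℝ) 1, snCDF l (Q u) = u) : Tendsto Q (𝓝[>] (0 : ℝ)) atBot := by
  refine tendsto_atBot.2 fun M => ?_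
  filter_upwards [Ioo_mem_nhdsGT (show (0 : ℝ) < 1 by norm_num),
    Ioo_mem_nhdsGT (snCDF_pos l M)] with u hu hu'
  by_contra! h
  have := snCDF_mono l h.le
  rw [hQ u hu] at this
  exact absurd hu'.2 (not_lt.2 this)

/-- Both quantiles satisfy `log u ~ -(1 + max lᵢ 0 ²) Qᵢ(u)² / 2`, which fixes their ratio. -/
lemma quantile_ratio {l₁ l₂ : ℝ} {Q₁ Q₂ : ℝ → ℝ}
    (hQ₁ : ∀ u ∈ Set.Ioo (0 : ℝ) 1, snCDF l₁ (Q₁ u) = u)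
    (hQ₂ : ∀ u ∈ Set.Ioo (0 : ℝ) 1, snCDF l₂ (Q₂ u) = u) :
    Tendsto (fun u => Q₁ u / Q₂ u) (𝓝[>] (0 : ℝ))
      (𝓝 (Real.sqrt ((1 + max l₂ 0 ^ 2) / (1 + max l₁ 0 ^ 2)))) := by
  have hx := quantile_tendsto_atBot hQ₁
  have hy := quantile_tendsto_atBot hQ₂
  have h1 := (log_snCDF_div_sq l₁).comp hx
  have h2 := (log_snCDF_div_sq l₂).comp hy
  have hne : -(1 + max l₁ 0 ^ 2) / 2 ≠ 0 := by
    have : 0 < 1 + max l₁ 0 ^ 2 := by positivity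
    linarith
  have h3 := (h2.div h1 hne).sqrt
  rw [show -(1 + max l₂ 0 ^ 2) / 2 / (-(1 + max l₁ 0 ^ 2) / 2)
    = (1 + max l₂ 0 ^ 2) / (1 + max l₁ 0 ^ 2) by
      rw [div_div_div_cancel_right₀ two_ne_zero, neg_div_neg_eq]] at h3
  refine h3.congr' ?_
  filter_upwards [Ioo_mem_nhdsGT (show (0 : ℝ) < 1 by norm_num),
    hx.eventually (eventually_lt_atBot 0), hy.eventually (eventually_lt_atBot 0)] with u hu hxu hyu
  have hlog : Real.log u ≠ 0 := (Real.log_neg hu.1 hu.2).ne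
  have := hxu.ne
  have := hyu.ne
  simp only [Pi.div_apply, Function.comp_apply, hQ₁ u hu, hQ₂ u hu]
  rw [show Real.log u / Q₂ u ^ 2 / (Real.log u / Q₁ u ^ 2) = (Q₁ u / Q₂ u) ^ 2 by field_simp]
  exact Real.sqrt_sq (div_pos_of_neg_of_neg hxu hyu).le

/-- With `r` the limit of `Q₁/Q₂`: either `A₁ = Q₂ (Q₁/Q₂ - ρ)` is driven to `-∞`, or
`B = Q₂ (α₁ Q₁/Q₂ + α₂)` is. The second alternative is only needed when both skewness parameters
are positive. -/
lemma ratio_dichotomy {ρ α₁ α₂ l₁ l₂ : ℝ} (hρ : ρ ∈ Set.Ioo (-1 : ℝ) 1)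
    (hl₁ : l₁ = (α₁ + ρ * α₂) / Real.sqrt (1 + α₂ ^ 2 * (1 - ρ ^ 2)))
    (hl₂ : l₂ = (α₂ + ρ * α₁) / Real.sqrt (1 + α₁ ^ 2 * (1 - ρ ^ 2))) :
    ρ < Real.sqrt ((1 + max l₂ 0 ^ 2) / (1 + max l₁ 0 ^ 2)) ∨
    0 < α₁ * Real.sqrt ((1 + max l₂ 0 ^ 2) / (1 + max l₁ 0 ^ 2)) + α₂ := by
  obtain ⟨h1, h2⟩ := hρ
  have hs : 0 < 1 - ρ ^ 2 := by nlinarith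
  have hk₁ : 0 < 1 + α₁ ^ 2 * (1 - ρ ^ 2) := by positivity
  have hk₂ : 0 < 1 + α₂ ^ 2 * (1 - ρ ^ 2) := by positivity
  have hsq₁ : l₁ ^ 2 = (α₁ + ρ * α₂) ^ 2 / (1 + α₂ ^ 2 * (1 - ρ ^ 2)) := by
    rw [hl₁, div_pow, Real.sq_sqrt hk₂.le]
  have hsq₂ : l₂ ^ 2 = (α₂ + ρ * α₁) ^ 2 / (1 + α₁ ^ 2 * (1 - ρ ^ 2)) := by
    rw [hl₂, div_pow, Real.sq_sqrt hk₁.le]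
  rcases le_or_gt l₁ 0 with c1 | c1
  · left
    rw [max_eq_right c1]
    refine h2.trans_le (Real.one_le_sqrt.2 ?_)
    norm_num
  have d1 : 0 < α₁ + ρ * α₂ := by
    rw [hl₁] at c1
    exact (div_pos_iff_of_pos_right (Real.sqrt_pos.2 hk₂)).1 c1
  rcases le_or_gt l₂ 0 with c2 | c2
  · left
    have d2 : α₂ + ρ * α₁ ≤ 0 := by
      by_contra! h
      rw [hl₂] at c2
      exact absurd (div_pos h (Real.sqrt_pos.2 hk₁)) (not_lt.2 c2)
    rw [max_eq_right c2, max_eq_left c1.le]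
    rcases lt_or_ge ρ 0 with hn | hn
    · exact hn.trans_le (Real.sqrt_nonneg _)
    refine Real.lt_sqrt_of_sq_lt ?_
    rw [lt_div_iff₀ (by positivity), hsq₁]
    have e1 : ρ * (α₁ + ρ * α₂) ≤ -α₂ * (1 - ρ ^ 2) := by nlinarith
    have e2 : (ρ * (α₁ + ρ * α₂)) ^ 2 ≤ (-α₂ * (1 - ρ ^ 2)) ^ 2 :=
      pow_le_pow_left₀ (by positivity) e1 2
    have e3 : ρ ^ 2 * ((α₁ + ρ * α₂) ^ 2 / (1 + α₂ ^ 2 * (1 - ρ ^ 2))) < 1 - ρ ^ 2 := by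
      rw [← mul_div_assoc, div_lt_iff₀ hk₂]
      nlinarith
    linarith
  · right
    have d2 : 0 < α₂ + ρ * α₁ := by
      rw [hl₂] at c2
      exact (div_pos_iff_of_pos_right (Real.sqrt_pos.2 hk₁)).1 c2
    have d3 : 0 < α₁ + α₂ := by nlinarith
    rw [max_eq_left c2.le, max_eq_left c1.le, hsq₁, hsq₂]
    -- Both `1 + lᵢ²` have the numerator `1 + α₁² + α₂² + 2ρα₁α₂`, which cancels in the ratio.
    rw [show (1 + (α₂ + ρ * α₁) ^ 2 / (1 + α₁ ^ 2 * (1 - ρ ^ 2))) /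
      (1 + (α₁ + ρ * α₂) ^ 2 / (1 + α₂ ^ 2 * (1 - ρ ^ 2)))
      = (1 + α₂ ^ 2 * (1 - ρ ^ 2)) / (1 + α₁ ^ 2 * (1 - ρ ^ 2)) by
        have e1 : 1 + (α₂ + ρ * α₁) ^ 2 / (1 + α₁ ^ 2 * (1 - ρ ^ 2)) =
          (1 + α₁ ^ 2 * (1 - ρ ^ 2) + (α₂ + ρ * α₁) ^ 2) / (1 + α₁ ^ 2 * (1 - ρ ^ 2)) := by
          field_simp
        have e2 : 1 + (α₁ + ρ * α₂) ^ 2 / (1 + α₂ ^ 2 * (1 - ρ ^ 2)) =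
          (1 + α₁ ^ 2 * (1 - ρ ^ 2) + (α₂ + ρ * α₁) ^ 2) / (1 + α₂ ^ 2 * (1 - ρ ^ 2)) := by
          field_simp; ring
        have hN : 0 < 1 + α₁ ^ 2 * (1 - ρ ^ 2) + (α₂ + ρ * α₁) ^ 2 := by positivity
        rw [e1, e2]
        field_simp, Real.sqrt_div hk₂.le]
    set a := Real.sqrt (1 + α₁ ^ 2 * (1 - ρ ^ 2)) with ha
    set b := Real.sqrt (1 + α₂ ^ 2 * (1 - ρ ^ 2)) with hb
    have ha0 : 0 < a := Real.sqrt_pos.2 hk₁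
    have hb0 : 0 < b := Real.sqrt_pos.2 hk₂
    have ha2 : a ^ 2 = 1 + α₁ ^ 2 * (1 - ρ ^ 2) := Real.sq_sqrt hk₁.le
    have hb2 : b ^ 2 = 1 + α₂ ^ 2 * (1 - ρ ^ 2) := Real.sq_sqrt hk₂.le
    suffices h : 0 < α₁ * b + α₂ * a by
      have : α₁ * (b / a) + α₂ = (α₁ * b + α₂ * a) / a := by field_simp
      rw [this]; positivity
    have key : (α₁ * b) ^ 2 - (α₂ * a) ^ 2 = (α₁ + α₂) * (α₁ - α₂) := by
      rw [mul_pow, mul_pow, ha2, hb2]; ring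
    rcases lt_or_ge α₁ 0 with n1 | n1
    · have n2 : 0 < α₂ := by linarith
      have : (-α₁ * b) ^ 2 < (α₂ * a) ^ 2 := by nlinarith
      have := lt_of_pow_lt_pow_left₀ 2 (by positivity) this
      linarith
    rcases lt_or_ge α₂ 0 with n2 | n2
    · have : (-α₂ * a) ^ 2 < (α₁ * b) ^ 2 := by nlinarith
      have := lt_of_pow_lt_pow_left₀ 2 (by positivity) this
      linarith
    rcases n1.lt_or_eq with n3 | n3
    · positivity
    · have : 0 < α₂ := by linarith
      rw [← n3]; simp; positivity

/-! ### The limit of the rescaled integral -/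

/-- The substitution `z = x - w / c`; no integrability of `f` is needed. -/
lemma setIntegral_Iic_eq_Ioi (f : ℝ → ℝ) (x : ℝ) {c : ℝ} (hc : 0 < c) :
    ∫ z in Set.Iic x, f z = c⁻¹ * ∫ w in Set.Ioi (0 : ℝ), f (x - w / c) := by
  have h2 := integral_comp_mul_left_Ioi (fun w => f (x - w)) 0 (inv_pos.2 hc)
  have h3 : ∫ z in Set.Iic x, f z = ∫ t in Set.Ioi (0 : ℝ), f (x - t) := by
    rw [← integral_indicator measurableSet_Iic, ← integral_Ici_eq_integral_Ioi,
      ← integral_indicator measurableSet_Ici,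
      ← integral_sub_left_eq_self ((Set.Iic x).indicator f) volume x]
    congr 1
    funext t
    by_cases ht : 0 ≤ t
    · rw [Set.indicator_of_mem (by simpa using ht), Set.indicator_of_mem (by simpa using ht)]
    · rw [Set.indicator_of_notMem (by simpa using ht), Set.indicator_of_notMem (by simpa using ht)]
  rw [h3]
  simp only [mul_zero, inv_inv, smul_eq_mul] at h2
  have h4 : (fun w => f (x - w / c)) = fun w => f (x - c⁻¹ * w) := by
    funext w; congr 2; ring
  rw [h4, h2, ← mul_assoc, inv_mul_cancel₀ hc.ne', one_mul]

/-- The rescaled Laplace-type integral converges to the total mass of the exponential law of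
rate `1/s`. -/
lemma laplace_limit {s a : ℝ} (hs : 0 < s) {A B : ℝ → ℝ}
    (hA : Tendsto A (𝓝[>] (0 : ℝ)) atBot) (hB : Tendsto B (𝓝[>] (0 : ℝ)) atTop) :
    Tendsto (fun u => ∫ w in Set.Ioi (0 : ℝ), s⁻¹ * Real.exp (-s⁻¹ * w) *
      (Real.exp (-(w / |A u|) ^ 2 / (2 * s)) * stdNormalCDF (B u - a * (w / |A u|))))
      (𝓝[>] (0 : ℝ)) (𝓝 1) := by
  have hs' : 0 < s⁻¹ := inv_pos.2 hs
  have hint : IntegrableOn (fun w : ℝ => s⁻¹ * Real.exp (-s⁻¹ * w)) (Set.Ioi 0) :=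
    (exp_neg_integrableOn_Ioi 0 hs').const_mul _
  have hval : ∫ w in Set.Ioi (0 : ℝ), s⁻¹ * Real.exp (-s⁻¹ * w) = 1 := by
    rw [integral_const_mul, integral_exp_mul_Ioi (neg_neg_of_pos hs') 0]
    simp [hs.ne']
  rw [← hval]
  refine tendsto_integral_filter_of_dominated_convergence _ ?_ ?_ hint ?_
  · refine Eventually.of_forall fun u => Measurable.aestronglyMeasurable ?_
    have : Measurable fun w : ℝ => stdNormalCDF (B u - a * (w / |A u|)) :=
      stdNormalCDF_mono.measurable.comp (by fun_prop)
    fun_prop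
  · refine Eventually.of_forall fun u => Eventually.of_forall fun w => ?_
    have h0 := stdNormalCDF_nonneg (B u - a * (w / |A u|))
    have h1 := stdNormalCDF_le_one (B u - a * (w / |A u|))
    have h2 : Real.exp (-(w / |A u|) ^ 2 / (2 * s)) ≤ 1 := by
      refine Real.exp_le_one_iff.2 ?_
      rw [neg_div]
      exact neg_nonpos.2 (by positivity)
    rw [Real.norm_of_nonneg (by positivity)]
    exact mul_le_of_le_one_right (by positivity) (mul_le_one₀ h2 h0 h1)
  · refine Eventually.of_forall fun w => ?_
    have hz : Tendsto (fun u => w / |A u|) (𝓝[>] (0 : ℝ)) (𝓝 0) :=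
      tendsto_const_nhds.div_atTop (tendsto_abs_atBot_atTop.comp hA)
    have hE : Tendsto (fun u => Real.exp (-(w / |A u|) ^ 2 / (2 * s))) (𝓝[>] (0 : ℝ)) (𝓝 1) := by
      have hc : Continuous fun v : ℝ => Real.exp (-v ^ 2 / (2 * s)) := by fun_prop
      simpa [Function.comp_def] using (hc.tendsto 0).comp hz
    have hΦ : Tendsto (fun u => stdNormalCDF (B u - a * (w / |A u|))) (𝓝[>] (0 : ℝ)) (𝓝 1) := by
      refine stdNormalCDF_tendsto_one.comp ?_
      have := hB.atTop_add (hz.const_mul a).neg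
      simpa [sub_eq_add_neg] using this
    simpa using (hE.mul hΦ).const_mul (s⁻¹ * Real.exp (-s⁻¹ * w))

/-- Theorem 2(c) of the paper: if `B(u) → +∞` then `A₁(u) → -∞` and
`P₁(u) ~ √(1-ρ²)·e^{-A₁(u)²/(2(1-ρ²))} / (√(2π)·|A₁(u)|·Φ(λ₂Q₂(u)))`. -/
theorem conditional_prob_asymptotics_B_atTop (ρ α₁ α₂ : ℝ)
    (hρ : ρ ∈ Set.Ioo (-1 : ℝ) 1) (hα₁ : α₁ ≠ 0) (l₁ l₂ : ℝ)
    (hl₁ : l₁ = (α₁ + ρ * α₂) / Real.sqrt (1 + α₂ ^ 2 * (1 - ρ ^ 2)))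
    (hl₂ : l₂ = (α₂ + ρ * α₁) / Real.sqrt (1 + α₁ ^ 2 * (1 - ρ ^ 2)))
    (Q₁ Q₂ : ℝ → ℝ)
    (hQ₁ : ∀ u ∈ Set.Ioo (0 : ℝ) 1, snCDF l₁ (Q₁ u) = u)
    (hQ₂ : ∀ u ∈ Set.Ioo (0 : ℝ) 1, snCDF l₂ (Q₂ u) = u)
    (hB : Tendsto (fun u => α₁ * Q₁ u + α₂ * Q₂ u) (𝓝[>] (0 : ℝ)) atTop) :
    Tendsto (fun u => Q₁ u - ρ * Q₂ u) (𝓝[>] (0 : ℝ)) atBot ∧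
    Tendsto (fun u =>
      (∫ z in Set.Iic (Q₁ u),
        (Real.sqrt (2 * Real.pi * (1 - ρ ^ 2)))⁻¹ *
          Real.exp (-(z - ρ * Q₂ u) ^ 2 / (2 * (1 - ρ ^ 2))) *
          (stdNormalCDF (α₁ * z + α₂ * Q₂ u) / stdNormalCDF (l₂ * Q₂ u))) /
      (Real.sqrt (1 - ρ ^ 2) *
          Real.exp (-(Q₁ u - ρ * Q₂ u) ^ 2 / (2 * (1 - ρ ^ 2))) /
        (Real.sqrt (2 * Real.pi) * |Q₁ u - ρ * Q₂ u| *
          stdNormalCDF (l₂ * Q₂ u))))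
      (𝓝[>] (0 : ℝ)) (𝓝 1) := by
  have hs : 0 < 1 - ρ ^ 2 := by nlinarith [hρ.1, hρ.2]
  have hy := quantile_tendsto_atBot hQ₂
  have hr := quantile_ratio hQ₁ hQ₂
  have hy0 : ∀ᶠ u in 𝓝[>] (0 : ℝ), Q₂ u < 0 := hy.eventually (eventually_lt_atBot 0)
  have hA : Tendsto (fun u => Q₁ u - ρ * Q₂ u) (𝓝[>] (0 : ℝ)) atBot := by
    rcases ratio_dichotomy hρ hl₁ hl₂ with h | h
    · have h1 := hy.atBot_mul_pos (sub_pos.2 h) (hr.sub_const ρ)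
      refine h1.congr' ?_
      filter_upwards [hy0] with u hu
      have := hu.ne
      field_simp
    · have h1 := hy.atBot_mul_pos h ((hr.const_mul α₁).add_const α₂)
      have h2 : Tendsto (fun u => α₁ * Q₁ u + α₂ * Q₂ u) (𝓝[>] (0 : ℝ)) atBot := by
        refine h1.congr' ?_
        filter_upwards [hy0] with u hu
        have := hu.ne
        field_simp
      obtain ⟨u, hu1, hu2⟩ := ((h2.eventually (eventually_lt_atBot 0)).and
        (hB.eventually (eventually_gt_atTop 0))).exists
      exact absurd hu1 (not_lt.2 hu2.le)
  refine ⟨hA, (laplace_limit (a := α₁) hs hA hB).congr' ?_⟩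
  filter_upwards [hA.eventually (eventually_lt_atBot 0)] with u hu
  have hA0 : 0 < |Q₁ u - ρ * Q₂ u| := abs_pos.2 hu.ne
  rw [setIntegral_Iic_eq_Ioi _ (Q₁ u) hA0]
  have hP := stdNormalCDF_pos (l₂ * Q₂ u)
  have hE := Real.exp_pos (-(Q₁ u - ρ * Q₂ u) ^ 2 / (2 * (1 - ρ ^ 2)))
  have hrt : 0 < Real.sqrt (1 - ρ ^ 2) := Real.sqrt_pos.2 hs
  have h2p : 0 < Real.sqrt (2 * Real.pi) := by positivity
  have hss : Real.sqrt (1 - ρ ^ 2) ^ 2 = 1 - ρ ^ 2 := Real.sq_sqrt hs.le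
  rw [eq_div_iff (by positivity), mul_comm, ← integral_const_mul, ← integral_const_mul]
  refine setIntegral_congr_fun measurableSet_Ioi fun w _ => ?_
  rw [show α₁ * (Q₁ u - w / |Q₁ u - ρ * Q₂ u|) + α₂ * Q₂ u
    = α₁ * Q₁ u + α₂ * Q₂ u - α₁ * (w / |Q₁ u - ρ * Q₂ u|) by ring]
  -- Completing the square: `-(A - t)² / 2s = -A² / 2s - w / s - t² / 2s` with `t = w / |A|`, `A < 0`.
  have hexp : Real.exp (-(Q₁ u - w / |Q₁ u - ρ * Q₂ u| - ρ * Q₂ u) ^ 2 / (2 * (1 - ρ ^ 2)))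
      = Real.exp (-(Q₁ u - ρ * Q₂ u) ^ 2 / (2 * (1 - ρ ^ 2))) *
        (Real.exp (-(1 - ρ ^ 2)⁻¹ * w) *
          Real.exp (-(w / |Q₁ u - ρ * Q₂ u|) ^ 2 / (2 * (1 - ρ ^ 2)))) := by
    rw [← Real.exp_add, ← Real.exp_add]
    congr 1
    rw [show Q₁ u - w / |Q₁ u - ρ * Q₂ u| - ρ * Q₂ u
      = (Q₁ u - ρ * Q₂ u) - w / |Q₁ u - ρ * Q₂ u| by ring, abs_of_neg hu]
    generalize Q₁ u - ρ * Q₂ u = A at hu ⊢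
    have := hu.ne
    field_simp
    ring
  rw [hexp, Real.sqrt_mul (show 0 ≤ 2 * Real.pi by positivity)]
  generalize Real.exp (-(Q₁ u - ρ * Q₂ u) ^ 2 / (2 * (1 - ρ ^ 2))) = E at hE ⊢
  generalize Real.exp (-(1 - ρ ^ 2)⁻¹ * w) = E₁
  generalize Real.exp (-(w / |Q₁ u - ρ * Q₂ u|) ^ 2 / (2 * (1 - ρ ^ 2))) = E₂
  generalize stdNormalCDF (α₁ * Q₁ u + α₂ * Q₂ u - α₁ * (w / |Q₁ u - ρ * Q₂ u|)) = Ψ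
  generalize stdNormalCDF (l₂ * Q₂ u) = P at hP ⊢
  generalize |Q₁ u - ρ * Q₂ u| = c at hA0 ⊢
  generalize Real.sqrt (2 * Real.pi) = p at h2p ⊢
  generalize Real.sqrt (1 - ρ ^ 2) = q at hrt hss ⊢
  rw [← hss]
  field_simp
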